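/- Let G be a finite group with centre Z and N ⊴ G a normal subgroup. If for every ρ ∈ Irr(G) trivial on Z there exists g ∈ N such that ρ restricted to C_G(g) contains the trivial character, then for every σ ∈ Irr(N) trivial on Z(N) there exists h ∈ N such that σ restricted to C_N(h) contains the trivial character. -/

import Mathlib

open scoped BigOperators Classical

open CategoryTheory in
/-- `χ` is the character of an irreducible complex representation of `G`. -/
def IsIrrChar (G : Type) [Group G] [Fintype G] (χ : G → ℂ) : Prop :=
  ∃ V : FDRep ℂ G, Simple V ∧ χ = fun g => V.character g

/-!
Let `K` be a normal subgroup of `G` and let `σ` be a nonzero representation of `N` trivial on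
`N ∩ K`. Then `σ` factors through the image of `N` in `G ⧸ K`, so its coinduction along `N → G ⧸ K`
is nonzero. Inflate it to `G` and choose an irreducible subrepresentation `ρ`, which is trivial on
`K`. A nonzero vector of `ρ` fixed by `C_G(g)` is an `N`-equivariant function `f` on `G ⧸ K`; at the
class of any `x : G` where it does not vanish, its value is a vector of `σ` fixed by
`N ∩ x C_G(g) x⁻¹ = C_N(x g x⁻¹)`, and `x g x⁻¹` stays in any normal subset containing `g`. The
theorem is the case where `K` is the centre of `G`, because `N ∩ Z(G) ≤ Z(N)`.
-/

theorem conj_mem_centralizer_singleton_iff {G : Type*} [Group G] {x g n : G} :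
    x⁻¹ * n * x ∈ Subgroup.centralizer {g} ↔ n ∈ Subgroup.centralizer {x * g * x⁻¹} := by
  rw [Subgroup.mem_centralizer_singleton_iff, Subgroup.mem_centralizer_singleton_iff,
    ← mul_right_inj x, ← mul_left_inj x⁻¹]
  simp only [mul_assoc, mul_inv_cancel_left, mul_inv_cancel, mul_one]

theorem center_subgroupOf_le_center {G : Type*} [Group G] (N : Subgroup G) :
    (Subgroup.center G).subgroupOf N ≤ Subgroup.center N := fun _ hz =>
  Subgroup.mem_center_iff.2 fun n => Subtype.ext (Subgroup.mem_center_iff.1 hz n)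

/-- The correspondence between the subrepresentations of a subrepresentation `W` of `ρ` and the
subrepresentations of `ρ` contained in `W`; the analogue of `Submodule.mapIic`. -/
def subrepresentationOrderIsoIic {k G V : Type*} [Semiring k] [Monoid G] [AddCommMonoid V]
    [Module k V] {ρ : Representation k G V} (W : Subrepresentation ρ) :
    Subrepresentation W.toRepresentation ≃o Set.Iic W where
  toFun τ := ⟨⟨τ.toSubmodule.map W.toSubmodule.subtype, by
      rintro g _ ⟨v, hv, rfl⟩
      exact ⟨W.toRepresentation g v, τ.apply_mem_toSubmodule g hv, rfl⟩⟩,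
    Submodule.map_subtype_le W.toSubmodule τ.toSubmodule⟩
  invFun τ := ⟨τ.1.toSubmodule.comap W.toSubmodule.subtype,
    fun g _ hv => τ.1.apply_mem_toSubmodule g hv⟩
  left_inv τ := Subrepresentation.ext (Submodule.comap_map_eq_of_injective
    W.toSubmodule.injective_subtype τ.toSubmodule)
  right_inv τ := Subtype.ext <| Subrepresentation.ext <|
    (Submodule.map_comap_subtype _ _).trans (inf_eq_right.2 τ.2)
  map_rel_iff' := Submodule.map_le_map_iff_of_injective W.toSubmodule.injective_subtype _ _

theorem exists_isIrreducible_subrepresentation {k G V : Type*} [Field k] [Monoid G]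
    [AddCommGroup V] [Module k V] [FiniteDimensional k V] [Nontrivial V]
    (ρ : Representation k G V) :
    ∃ W : Subrepresentation ρ, W.toRepresentation.IsIrreducible := by
  have toSubmodule_strictMono :
      StrictMono (Subrepresentation.toSubmodule : Subrepresentation ρ → Submodule k V) :=
    fun _ _ h => h
  have : WellFoundedLT (Subrepresentation ρ) := toSubmodule_strictMono.wellFoundedLT
  have top_ne_bot : (⊤ : Subrepresentation ρ) ≠ ⊥ := fun h =>
    top_ne_bot (α := Submodule k V) (congrArg Subrepresentation.toSubmodule h)
  obtain ⟨W, hW, -⟩ := (eq_bot_or_exists_atom_le (⊤ : Subrepresentation ρ)).resolve_left top_ne_bot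
  have := Set.isSimpleOrder_Iic_iff_isAtom.2 hW
  exact ⟨W, (subrepresentationOrderIsoIic W).isSimpleOrder⟩

theorem ker_le_ker_toRepresentation {k G V : Type*} [Semiring k] [Group G] [AddCommMonoid V]
    [Module k V] {ρ : Representation k G V} (W : Subrepresentation ρ) :
    MonoidHom.ker ρ ≤ MonoidHom.ker W.toRepresentation := fun _ hg =>
  LinearMap.ext fun w => Subtype.ext (LinearMap.congr_fun (MonoidHom.mem_ker.1 hg) w.1)

theorem nontrivial_of_simple {k G : Type*} [Field k] [Monoid G] (V : FDRep k G)
    [CategoryTheory.Simple V] : Nontrivial V := by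
  by_contra h
  have := not_nontrivial_iff_subsingleton.1 h
  refine CategoryTheory.id_nonzero V (Action.Hom.ext ?_)
  ext v
  exact Subsingleton.elim (α := V) _ _

theorem isIrrChar_character {G V : Type} [Group G] [Fintype G] [AddCommGroup V] [Module ℂ V]
    [FiniteDimensional ℂ V] (ρ : Representation ℂ G V) [ρ.IsIrreducible] :
    IsIrrChar G ρ.character := by
  refine ⟨FDRep.of ρ, (FDRep.simple_iff_char_is_norm_one _).2 ?_, rfl⟩
  have card_ne_zero : (Nat.card G : ℂ) ≠ 0 := NeZero.ne _
  have := invertibleOfNonzero card_ne_zero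
  have norm_one := Representation.card_inv_mul_sum_char_mul_char_eq_finrank ρ ρ
  rw [Representation.IsIrreducible.finrank_intertwiningMap_self, Nat.cast_one,
    inv_mul_eq_one₀ card_ne_zero] at norm_one
  exact norm_one.symm

section CharacterSum

variable {k G V : Type*} [Field k] [Group G] [AddCommGroup V] [Module k V]
  [FiniteDimensional k V] (ρ : Representation k G V) (H : Subgroup G)

theorem sum_subgroup_character_ne_zero_iff [CharZero k] [Fintype G] [DecidablePred (· ∈ H)] :
    (∑ g : G, if g ∈ H then ρ.character g else 0) ≠ 0 ↔ ∃ v ≠ 0, ∀ h ∈ H, ρ h v = v := by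
  let ρH : Representation k H V := ρ.comp H.subtype
  have card_ne_zero : (Nat.card H : k) ≠ 0 := NeZero.ne _
  have := invertibleOfNonzero card_ne_zero
  have sum_eq : (∑ g : G, if g ∈ H then ρ.character g else 0) = ∑ h : H, ρH.character h := by
    rw [← Finset.sum_filter]
    exact Finset.sum_subtype _ (by simp) _
  have finrank_eq := Representation.card_inv_mul_sum_char_eq_finrank ρH
  rw [inv_mul_eq_iff_eq_mul₀ card_ne_zero] at finrank_eq
  rw [sum_eq, finrank_eq, mul_ne_zero_iff_left card_ne_zero, Nat.cast_ne_zero,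
    ne_eq, Submodule.finrank_eq_zero, ← ne_eq, Submodule.ne_bot_iff]
  simp only [Representation.mem_invariants, Subtype.forall, and_comm]
  rfl

theorem le_ker_iff_character_eq [CharZero k] [Finite H] :
    H ≤ MonoidHom.ker ρ ↔ ∀ h ∈ H, ρ.character h = ρ.character 1 := by
  refine ⟨fun hH h hh => ?_, fun hχ h hh => ?_⟩
  · rw [Representation.character, Representation.character, MonoidHom.mem_ker.1 (hH hh), map_one ρ]
  -- The mean of `ρ.character` over `H` is the dimension of the `H`-invariants, here that of `V`.
  let ρH : Representation k H V := ρ.comp H.subtype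
  have card_ne_zero : (Nat.card H : k) ≠ 0 := NeZero.ne _
  have := invertibleOfNonzero card_ne_zero
  have := Fintype.ofFinite H
  have character_eq (h : H) : ρH.character h = Module.finrank k V :=
    (hχ h h.2).trans ρ.char_one
  have finrank_eq := Representation.card_inv_mul_sum_char_eq_finrank ρH
  simp only [character_eq, Finset.sum_const, Finset.card_univ, ← Nat.card_eq_fintype_card,
    nsmul_eq_mul, inv_mul_cancel_left₀ card_ne_zero, Nat.cast_inj] at finrank_eq
  have invariants_eq_top := Submodule.eq_top_of_finrank_eq finrank_eq.symm
  exact LinearMap.ext fun v =>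
    (Representation.mem_invariants ρH v).1 (invariants_eq_top ▸ Submodule.mem_top) ⟨h, hh⟩

end CharacterSum

section Coinduction

variable {k G Q V : Type*} [Semiring k] [Group G] [Group Q] [AddCommMonoid V]
  [Module k V] {φ : G →* Q} {ρ : Representation k G V}

theorem exists_mem_coindV_apply_one_eq (hφ : φ.ker ≤ MonoidHom.ker ρ) (v : V) :
    ∃ f ∈ Representation.coindV φ ρ, f 1 = v := by
  have factors : Function.FactorsThrough (fun g => ρ g v) φ := by
    intro a b hab
    have ker_mem : b⁻¹ * a ∈ MonoidHom.ker ρ := hφ (φ.eq_iff.1 hab)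
    have ρ_eq : ρ a = ρ b := by
      rw [← mul_inv_cancel_left b a, map_mul, MonoidHom.mem_ker.1 ker_mem, mul_one]
    exact LinearMap.congr_fun ρ_eq v
  refine ⟨Function.extend φ (fun g => ρ g v) 0, fun g x => ?_, ?_⟩
  · by_cases hx : ∃ a, φ a = x
    · obtain ⟨a, rfl⟩ := hx
      rw [← map_mul, factors.extend_apply, factors.extend_apply, map_mul, Module.End.mul_apply]
    · have hgx : ¬∃ a, φ a = φ g * x := fun ⟨a, ha⟩ =>
        hx ⟨g⁻¹ * a, by rw [map_mul, map_inv, ha, inv_mul_cancel_left]⟩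
      rw [Function.extend_apply' _ _ _ hx, Function.extend_apply' _ _ _ hgx, Pi.zero_apply,
        Pi.zero_apply, map_zero]
  · rw [← map_one φ, factors.extend_apply, map_one, Module.End.one_apply]

theorem nontrivial_coindV [Nontrivial V] (hφ : φ.ker ≤ MonoidHom.ker ρ) :
    Nontrivial (Representation.coindV φ ρ) := by
  obtain ⟨v, hv⟩ := exists_ne (0 : V)
  obtain ⟨f, hf, rfl⟩ := exists_mem_coindV_apply_one_eq hφ v
  exact ⟨⟨f, hf⟩, 0, fun h => hv (congrFun (congrArg Subtype.val h) 1)⟩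

theorem exists_ne_zero_of_coind_apply_eq {ψ : G →* Q} (hψ : Function.Surjective ψ)
    {N H : Subgroup G} {σ : Representation k N V}
    {f : Representation.coindV (ψ.comp N.subtype) σ} (hf : f ≠ 0)
    (hfH : ∀ h ∈ H, Representation.coind (ψ.comp N.subtype) σ (ψ h) f = f) :
    ∃ x : G, ∃ v ≠ 0, ∀ n : N, x⁻¹ * n * x ∈ H → σ n v = v := by
  obtain ⟨q, hq⟩ : ∃ q, f.1 q ≠ 0 := Function.ne_iff.1 (Subtype.coe_ne_coe.2 hf)
  obtain ⟨x, rfl⟩ := hψ q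
  refine ⟨x, f.1 (ψ x), hq, fun n hn => ?_⟩
  calc
    σ n (f.1 (ψ x)) = f.1 (ψ n * ψ x) := (f.2 n (ψ x)).symm
    _ = f.1 (ψ x * ψ (x⁻¹ * n * x)) := by
      rw [← map_mul, ← map_mul, mul_assoc x⁻¹, mul_inv_cancel_left]
    _ = f.1 (ψ x) := congrFun (congrArg Subtype.val (hfH _ hn)) (ψ x)

end Coinduction

theorem exists_isIrrChar_constituent {G V : Type} [Group G] [Fintype G] [AddCommGroup V]
    [Module ℂ V] [FiniteDimensional ℂ V] [Nontrivial V] {ρ : Representation ℂ G V}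
    {K : Subgroup G} (hK : K ≤ MonoidHom.ker ρ) :
    ∃ χ : G → ℂ, IsIrrChar G χ ∧ (∀ z ∈ K, χ z = χ 1) ∧
      ∀ H : Subgroup G, (∑ h : G, if h ∈ H then χ h else 0) ≠ 0 →
        ∃ v ≠ 0, ∀ h ∈ H, ρ h v = v := by
  obtain ⟨W, _⟩ := exists_isIrreducible_subrepresentation ρ
  refine ⟨W.toRepresentation.character, isIrrChar_character W.toRepresentation,
    (le_ker_iff_character_eq _ K).1 (hK.trans (ker_le_ker_toRepresentation W)), fun H hH => ?_⟩
  obtain ⟨w, hw, w_fixed⟩ := (sum_subgroup_character_ne_zero_iff W.toRepresentation H).1 hH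
  exact ⟨w, Subtype.coe_ne_coe.2 hw, fun h hh => congrArg Subtype.val (w_fixed h hh)⟩

theorem stmt5_general {G : Type} [Group G] [Fintype G] (N K : Subgroup G) [K.Normal] {S : Set G}
    (hS : ∀ g ∈ S, ∀ x, x * g * x⁻¹ ∈ S)
    (hG : ∀ χ : G → ℂ, IsIrrChar G χ → (∀ z ∈ K, χ z = χ 1) →
      ∃ g ∈ S, (∑ h : G, if h ∈ Subgroup.centralizer {g} then χ h else 0) ≠ 0)
    {V : Type} [AddCommGroup V] [Module ℂ V] [FiniteDimensional ℂ V] [Nontrivial V]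
    (σ : Representation ℂ N V) (hσ : ∀ z ∈ K.subgroupOf N, σ.character z = σ.character 1) :
    ∃ h ∈ S,
      (∑ x : N, if (x : G) ∈ Subgroup.centralizer {h} then σ.character x else 0) ≠ 0 := by
  let ψ := QuotientGroup.mk' K
  let φ : N →* G ⧸ K := ψ.comp N.subtype
  let τ : Representation ℂ G (Representation.coindV φ σ) := (Representation.coind φ σ).comp ψ
  have ker_φ_le : φ.ker ≤ MonoidHom.ker σ := (le_ker_iff_character_eq σ _).2 fun z hz =>
    hσ z ((QuotientGroup.eq_one_iff (z : G)).1 hz)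
  have le_ker_τ : K ≤ MonoidHom.ker τ := fun z hz =>
    (congrArg _ ((QuotientGroup.eq_one_iff z).2 hz)).trans (map_one (Representation.coind φ σ))
  have := nontrivial_coindV ker_φ_le
  obtain ⟨χ, χ_irr, χ_trivial, exists_fixed⟩ := exists_isIrrChar_constituent le_ker_τ
  obtain ⟨g, hg, sum_ne_zero⟩ := hG χ χ_irr χ_trivial
  obtain ⟨f, hf, f_fixed⟩ := exists_fixed _ sum_ne_zero
  obtain ⟨x, v, hv, v_fixed⟩ :=
    exists_ne_zero_of_coind_apply_eq (QuotientGroup.mk'_surjective K) hf f_fixed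
  exact ⟨x * g * x⁻¹, hS g hg x, (sum_subgroup_character_ne_zero_iff σ
    ((Subgroup.centralizer {x * g * x⁻¹}).subgroupOf N)).2
    ⟨v, hv, fun n hn => v_fixed n (conj_mem_centralizer_singleton_iff.2 hn)⟩⟩

/-- If every `ρ ∈ Irr(G)` trivial on `Z(G)` contains the trivial character on some
`C_G(g)` with `g ∈ N`, then every `σ ∈ Irr(N)` trivial on `Z(N)` contains the trivial
character on some `C_N(h)` with `h ∈ N`. -/
theorem stmt5 (G : Type) [Group G] [Fintype G] (N : Subgroup G) [N.Normal]
    (hG : ∀ ρ : G → ℂ, IsIrrChar G ρ → (∀ z ∈ Subgroup.center G, ρ z = ρ 1) →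
      ∃ g ∈ N, (∑ h : G, if h ∈ Subgroup.centralizer {g} then ρ h else 0) ≠ 0) :
    ∀ σ : ↥N → ℂ, IsIrrChar ↥N σ →
      (∀ z ∈ Subgroup.center ↥N, σ z = σ 1) →
      ∃ h ∈ N, (∑ x : ↥N, if (x : G) ∈ Subgroup.centralizer {h} then σ x else 0) ≠ 0 := by
  rintro _ ⟨V, _, rfl⟩ hσ
  have := nontrivial_of_simple V
  exact stmt5_general N (Subgroup.center G) ‹N.Normal›.conj_mem hG V.ρ fun z hz =>
    hσ z (center_subgroupOf_le_center N hz)
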